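/- Let L be a completely distributive commutative subspace lattice on H and Φ a rank preserving linear map on Alg L such that every N ∈ F is consistent with respect to Φ. For each N ∈ F fix a linear map U_N : N → H and a linear map V_N : N₋^⊥ → H with Φ(x⊗f*) = (U_N x)⊗(V_N f)* for all x ∈ N and f ∈ N₋^⊥. Let M₀, M₁, …, Mₙ be a cycle in F (so Mₙ = M₀ and consecutive terms are comparable), and let λ₀, …, λ_{n-1} be nonzero complex numbers such that for each k: if M_k ⊆ M_{k+1} then U_{M_k} x = λ_k · U_{M_{k+1}} x for all x ∈ M_k and V_{M_{k+1}} f = conj(λ_k) · V_{M_k} f for all f ∈ (M_{k+1})₋^⊥, while if M_{k+1} ⊆ M_k then U_{M_{k+1}} x = λ_k⁻¹ · U_{M_k} x for all x ∈ M_{k+1} and V_{M_k} f = conj(λ_k⁻¹) · V_{M_{k+1}} f for all f ∈ (M_k)₋^⊥. Then λ₀ λ₁ ⋯ λ_{n-1} = 1. -/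

import Mathlib

open scoped InnerProductSpace

noncomputable section

/-- The join (closed linear span) of a family of subspaces of a Hilbert space. -/
def closedJoin {H : Type*} [NormedAddCommGroup H] [InnerProductSpace ℂ H]
    (S : Set (Submodule ℂ H)) : Submodule ℂ H :=
  (sSup S).topologicalClosure

/-- A subspace lattice on `H`: a family of closed subspaces containing `{0}` and `H`,
closed under arbitrary intersections and arbitrary closed linear spans. -/
structure IsSubspaceLattice {H : Type*} [NormedAddCommGroup H] [InnerProductSpace ℂ H]
    (L : Set (Submodule ℂ H)) : Prop where
  isClosed : ∀ E ∈ L, IsClosed (E : Set H)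
  bot_mem : ⊥ ∈ L
  top_mem : ⊤ ∈ L
  sInf_mem : ∀ S : Set (Submodule ℂ H), S ⊆ L → sInf S ∈ L
  join_mem : ∀ S : Set (Submodule ℂ H), S ⊆ L → closedJoin S ∈ L

/-- `M₋`: the join of all members of `L` that do not contain `M`. -/
def minus {H : Type*} [NormedAddCommGroup H] [InnerProductSpace ℂ H]
    (L : Set (Submodule ℂ H)) (M : Submodule ℂ H) : Submodule ℂ H :=
  closedJoin {E | E ∈ L ∧ ¬ M ≤ E}

open Classical in
/-- The orthogonal projection of `H` onto a closed subspace `E`, as an operator on `H`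
(junk value `0` if `E` is not closed). -/
def projOf {H : Type*} [NormedAddCommGroup H] [InnerProductSpace ℂ H] [CompleteSpace H]
    (E : Submodule ℂ H) : H →L[ℂ] H :=
  if h : IsClosed (E : Set H) then
    haveI : CompleteSpace E := h.completeSpace_coe
    E.subtypeL.comp (Submodule.orthogonalProjection E)
  else 0

/-- A commutative subspace lattice: the orthogonal projections onto members commute. -/
structure IsCSL {H : Type*} [NormedAddCommGroup H] [InnerProductSpace ℂ H] [CompleteSpace H]
    (L : Set (Submodule ℂ H)) extends IsSubspaceLattice L : Prop where
  commutes : ∀ E ∈ L, ∀ F ∈ L, projOf E * projOf F = projOf F * projOf E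

/-- Complete distributivity of the lattice `L` (meets are intersections, joins are
closed linear spans). -/
def IsCompletelyDistributive {H : Type*} [NormedAddCommGroup H] [InnerProductSpace ℂ H]
    (L : Set (Submodule ℂ H)) : Prop :=
  ∀ (I : Type) (J : I → Type) (E : (i : I) → J i → Submodule ℂ H),
    (∀ i j, E i j ∈ L) →
     ((⨅ i, closedJoin (Set.range (E i)))
        = closedJoin (Set.range fun φ : (∀ i, J i) => ⨅ i, E i (φ i)))
    ∧ (closedJoin (Set.range fun i => ⨅ j, E i j)
        = ⨅ φ : (∀ i, J i), closedJoin (Set.range fun i => E i (φ i)))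

/-- `Alg L`: all bounded operators leaving every member of `L` invariant. -/
def algL {H : Type*} [NormedAddCommGroup H] [InnerProductSpace ℂ H]
    (L : Set (Submodule ℂ H)) : Set (H →L[ℂ] H) :=
  {T | ∀ E ∈ L, ∀ x ∈ E, T x ∈ E}

/-- The rank one operator `x ⊗ f* : h ↦ ⟨h, f⟩ x`. -/
def rankOne {H : Type*} [NormedAddCommGroup H] [InnerProductSpace ℂ H]
    (x f : H) : H →L[ℂ] H :=
  (innerSL ℂ f).smulRight x

/-- The rank of a bounded operator: the dimension of its range. -/
def opRank {H : Type*} [NormedAddCommGroup H] [InnerProductSpace ℂ H]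
    (T : H →L[ℂ] H) : Cardinal :=
  Module.rank ℂ (LinearMap.range (T : H →ₗ[ℂ] H))

/-- `Φ` is a linear map of `Alg L` into itself. -/
structure IsLinearOnAlg {H : Type*} [NormedAddCommGroup H] [InnerProductSpace ℂ H]
    (L : Set (Submodule ℂ H)) (Φ : (H →L[ℂ] H) → (H →L[ℂ] H)) : Prop where
  maps : ∀ A ∈ algL L, Φ A ∈ algL L
  map_add : ∀ A ∈ algL L, ∀ B ∈ algL L, Φ (A + B) = Φ A + Φ B
  map_smul : ∀ (c : ℂ), ∀ A ∈ algL L, Φ (c • A) = c • Φ A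

/-- `Φ` preserves the rank of every finite rank operator in `Alg L`. -/
def RankPreserving {H : Type*} [NormedAddCommGroup H] [InnerProductSpace ℂ H]
    (L : Set (Submodule ℂ H)) (Φ : (H →L[ℂ] H) → (H →L[ℂ] H)) : Prop :=
  ∀ A ∈ algL L, opRank A < Cardinal.aleph0 → opRank (Φ A) = opRank A

/-- `a ∼ b`: (nonzero) vectors `a` and `b` are linearly dependent. -/
def Dep {H : Type*} [NormedAddCommGroup H] [InnerProductSpace ℂ H] (a b : H) : Prop :=
  ∃ c : ℂ, c ≠ 0 ∧ b = c • a

/-- `N` is consistent with respect to `Φ`. -/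
def Consistent {H : Type*} [NormedAddCommGroup H] [InnerProductSpace ℂ H]
    (L : Set (Submodule ℂ H)) (Φ : (H →L[ℂ] H) → (H →L[ℂ] H))
    (N : Submodule ℂ H) : Prop :=
  N ≠ ⊥ ∧ minus L N ≠ ⊤ ∧
    ∃ (U : N →ₗ[ℂ] H) (V : ((minus L N)ᗮ : Submodule ℂ H) →ₗ[ℂ] H),
      ∀ (x : N) (f : ((minus L N)ᗮ : Submodule ℂ H)),
        Φ (rankOne (x : H) (f : H)) = rankOne (U x) (V f)

/-- `N` is twisted with respect to `Φ`. -/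
def Twisted {H : Type*} [NormedAddCommGroup H] [InnerProductSpace ℂ H]
    (L : Set (Submodule ℂ H)) (Φ : (H →L[ℂ] H) → (H →L[ℂ] H))
    (N : Submodule ℂ H) : Prop :=
  N ≠ ⊥ ∧ minus L N ≠ ⊤ ∧
    ∃ (U : ((minus L N)ᗮ : Submodule ℂ H) →ₗ⋆[ℂ] H) (V : N →ₗ⋆[ℂ] H),
      ∀ (x : N) (f : ((minus L N)ᗮ : Submodule ℂ H)),
        Φ (rankOne (x : H) (f : H)) = rankOne (U f) (V x)

/-- `N` is isolated: `dim N = 1` and `N^⊥ ∈ L`. -/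
def Isolated {H : Type*} [NormedAddCommGroup H] [InnerProductSpace ℂ H]
    (L : Set (Submodule ℂ H)) (N : Submodule ℂ H) : Prop :=
  Module.rank ℂ N = 1 ∧ Nᗮ ∈ L

/-- The family `F` of all `N ∈ L` with `N ≠ {0}` and `N₋ ≠ H`. -/
def famF {H : Type*} [NormedAddCommGroup H] [InnerProductSpace ℂ H]
    (L : Set (Submodule ℂ H)) : Set (Submodule ℂ H) :=
  {N | N ∈ L ∧ N ≠ ⊥ ∧ minus L N ≠ ⊤}

/-- Subspaces are comparable if one contains the other. -/
def Comparable' {H : Type*} [NormedAddCommGroup H] [InnerProductSpace ℂ H]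
    (M N : Submodule ℂ H) : Prop :=
  M ≤ N ∨ N ≤ M

/-- There is a chain in `F` from `M` to `N`. -/
def ChainConn {H : Type*} [NormedAddCommGroup H] [InnerProductSpace ℂ H]
    (L : Set (Submodule ℂ H)) (M N : Submodule ℂ H) : Prop :=
  ∃ (n : ℕ) (c : Fin (n + 1) → Submodule ℂ H),
    (∀ k, c k ∈ famF L) ∧ c 0 = M ∧ c (Fin.last n) = N ∧
      ∀ k : Fin n, Comparable' (c k.castSucc) (c k.succ)

/-- `𝔊_N`: all members of `F` that can be connected to `N` by a chain. -/
def GSet {H : Type*} [NormedAddCommGroup H] [InnerProductSpace ℂ H]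
    (L : Set (Submodule ℂ H)) (N : Submodule ℂ H) : Set (Submodule ℂ H) :=
  {M | M ∈ famF L ∧ ChainConn L N M}

end

/-!
Since a rank one operator determines its factors up to a scalar, the maps `U N` are proportional
along inclusions `A ≤ B` of members of `F`; the factors `w A B` form a cocycle on the poset `F`, and
`∏ λ_k` is its holonomy along a closed zigzag `A₀ ≤ B₀ ≥ A₁ ≤ B₁ ≥ ⋯`.

If two of the `A i` have a common lower bound in `F`, or two of the `B i` a common upper bound, the
zigzag can be cut there into two shorter ones. Otherwise, because the projections commute, the
subspaces `A i` are pairwise orthogonal, and so are the subspaces `(B i)₋ᗮ`. Choose nonzero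
`x i ∈ A i` and `f i ∈ (B i)₋ᗮ`, and `z i ∈ B i` in the span of `x i` and `x (i + 1)` with
`U (B i) (z i) = U (A i) (x i) - U (A (i + 1)) (x (i + 1))`. These images sum to zero, so `Φ` sends
`∑ z i ⊗ (f i)*` to an operator of rank less than the number of terms. As the `f i` are orthogonal,
the `z i` must then be linearly dependent, which says exactly that the holonomy is `1`.
-/

namespace CSLCycle

open Equiv

universe u

section Perm

variable {ι : Type*} {σ : Perm ι}

lemma sign_of_isCycleOn_univ [Fintype ι] [DecidableEq ι] [Nontrivial ι]
    (hσ : σ.IsCycleOn Set.univ) :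
    Perm.sign σ = -(-1) ^ Fintype.card ι := by
  have hcycle : σ.IsCycle :=
    Perm.isCycle_iff_exists_isCycleOn.2 ⟨_, Set.nontrivial_univ, hσ, fun x _ ↦ Set.mem_univ x⟩
  have hsupport : σ.support = Finset.univ := Finset.eq_univ_of_forall fun x ↦
    Perm.mem_support.2 (hσ.apply_ne Set.nontrivial_univ (Set.mem_univ x))
  rw [hcycle.sign, hsupport, Finset.card_univ]

lemma not_isCycleOn_univ_of_sign_eq_neg [Fintype ι] [DecidableEq ι] [Nontrivial ι] {τ : Perm ι}
    (hσ : σ.IsCycleOn Set.univ) (hτ : Perm.sign τ = -Perm.sign σ) :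
    ¬ τ.IsCycleOn Set.univ := fun h ↦
  units_ne_neg_self (Perm.sign σ) <|
    (sign_of_isCycleOn_univ hσ).trans ((sign_of_isCycleOn_univ h).symm.trans hτ)

lemma forall_of_isCycleOn_univ [Finite ι] (hσ : σ.IsCycleOn Set.univ) {p : ι → Prop}
    (hp : ∀ i, p i → p (σ i)) {i : ι} (hi : p i) (j : ι) : p j := by
  obtain ⟨n, rfl⟩ := (hσ.2 (Set.mem_univ i) (Set.mem_univ j)).exists_nat_pow_eq
  induction n with
  | zero => simpa using hi
  | succ n ih => simpa only [pow_succ', Perm.mul_apply] using hp _ ih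

end Perm

section Crown

variable {α G ι : Type*} [CommGroup G]

/-- The product of `w` along the closed zigzags `A i, B i, A (σ i), B (σ i), …`, where the steps
from `B i` to `A (σ i)` count inversely. -/
def holonomy [Fintype ι] (w : α → α → G) (σ : Perm ι) (A B : ι → α) : G :=
  ∏ i, w (A i) (B i) / w (A (σ i)) (B i)

lemma holonomy_subtype_mul [Fintype ι] (w : α → α → G) {σ : Perm ι} (A B : ι → α)
    {p : ι → Prop} [DecidablePred p] (hp : ∀ i, p (σ i) ↔ p i) :
    holonomy w (σ.subtypePerm hp) (fun i : {i // p i} ↦ A i) (fun i ↦ B i) *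
      holonomy w (σ.subtypePerm fun i ↦ not_congr (hp i)) (fun i : {i // ¬ p i} ↦ A i)
        (fun i ↦ B i) = holonomy w σ A B :=
  Fintype.prod_subtype_mul_prod_subtype p fun i ↦ w (A i) (B i) / w (A (σ i)) (B i)

variable [Preorder α]

/-- A multiplicative `1`-cocycle on the order complex of a preorder; only the values `w a b` with
`a ≤ b` matter. -/
def IsCocycle (w : α → α → G) : Prop :=
  ∀ ⦃a b c : α⦄, a ≤ b → b ≤ c → w a c = w a b * w b c

/-- A disjoint union of closed zigzags `A i ≤ B i ≥ A (σ i) ≤ B (σ i) ≥ ⋯`, one for each cycle of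
the permutation `σ`. -/
structure IsCrown (σ : Perm ι) (A B : ι → α) : Prop where
  le : ∀ i, A i ≤ B i
  apply_le : ∀ i, A (σ i) ≤ B i

/-- A single closed zigzag that admits no shortcut: no two of its lower elements have a common
lower bound and no two of its upper elements have a common upper bound. -/
structure IsReducedCrown (σ : Perm ι) (A B : ι → α) : Prop extends IsCrown σ A B where
  isCycleOn : σ.IsCycleOn Set.univ
  not_bddBelow : Pairwise fun i j ↦ ¬ BddBelow {A i, A j}
  not_bddAbove : Pairwise fun i j ↦ ¬ BddAbove {B i, B j}

variable {w : α → α → G} {σ : Perm ι} {A A' B B' : ι → α}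

lemma IsCocycle.apply_self (hw : IsCocycle w) (a : α) : w a a = 1 :=
  left_eq_mul.1 (hw le_rfl le_rfl)

lemma IsCrown.subtype {p : ι → Prop} (hc : IsCrown σ A B) (hp : ∀ i, p (σ i) ↔ p i) :
    IsCrown (σ.subtypePerm hp) (fun i ↦ A i) (fun i ↦ B i) :=
  ⟨fun i ↦ hc.le i, fun i ↦ hc.apply_le i⟩

lemma exists_le_apply_swap_eq [DecidableEq ι] {i j : ι} (h : BddBelow {A i, A j}) :
    ∃ A' : ι → α, (∀ k, A' k ≤ A k) ∧ ∀ k, A' (swap i j k) = A' k := by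
  obtain ⟨N, hN⟩ := h
  let A' : ι → α := fun k ↦ if k = i ∨ k = j then N else A k
  refine ⟨A', fun k ↦ ?_, apply_swap_eq_self (by simp [A'])⟩
  dsimp only [A']
  split_ifs with hk
  · obtain rfl | rfl := hk <;> exact hN (by simp)
  · exact le_rfl

lemma exists_ge_apply_swap_eq [DecidableEq ι] {i j : ι} (h : BddAbove {B i, B j}) :
    ∃ B' : ι → α, (∀ k, B k ≤ B' k) ∧ ∀ k, B' (swap i j k) = B' k :=
  exists_le_apply_swap_eq (α := αᵒᵈ) (A := B) h

variable [Fintype ι]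

lemma holonomy_congr_lower (hw : IsCocycle w) (hc : IsCrown σ A B) (hA : ∀ i, A' i ≤ A i) :
    holonomy w σ A' B = holonomy w σ A B := by
  simp only [holonomy, hw (hA _) (hc.le _), hw (hA _) (hc.apply_le _), Finset.prod_div_distrib,
    Finset.prod_mul_distrib, Equiv.prod_comp σ fun i ↦ w (A' i) (A i), mul_div_mul_left_eq_div]

lemma holonomy_congr_upper (hw : IsCocycle w) (hc : IsCrown σ A B) (hB : ∀ i, B i ≤ B' i) :
    holonomy w σ A B' = holonomy w σ A B := by
  simp only [holonomy, hw (hc.le _) (hB _), hw (hc.apply_le _) (hB _), mul_div_mul_right_eq_div]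

/-- Once `A i` and `A j` are both lowered to a common lower bound, the closed zigzag can be cut
there into two. -/
lemma IsCrown.exists_not_isCycleOn_of_bddBelow (hw : IsCocycle w) (hc : IsCrown σ A B)
    (hσ : σ.IsCycleOn Set.univ) {i j : ι} (hij : i ≠ j) (hbdd : BddBelow {A i, A j}) :
    ∃ (τ : Perm ι) (A' : ι → α), IsCrown τ A' B ∧ ¬ τ.IsCycleOn Set.univ ∧
      holonomy w τ A' B = holonomy w σ A B := by
  classical
  have := nontrivial_of_ne i j hij
  obtain ⟨A', hA, hswap⟩ := exists_le_apply_swap_eq hbdd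
  refine ⟨swap i j * σ, A', ⟨fun k ↦ (hA k).trans (hc.le k), fun k ↦ ?_⟩,
    not_isCycleOn_univ_of_sign_eq_neg hσ (by simp [Perm.sign_swap hij]), ?_⟩
  · rw [Perm.mul_apply, hswap]
    exact (hA _).trans (hc.apply_le k)
  · rw [← holonomy_congr_lower hw hc hA]
    simp only [holonomy, Perm.mul_apply, hswap]

/-- Once `B i` and `B j` are both raised to a common upper bound, the closed zigzag can be cut
there into two. -/
lemma IsCrown.exists_not_isCycleOn_of_bddAbove (hw : IsCocycle w) (hc : IsCrown σ A B)
    (hσ : σ.IsCycleOn Set.univ) {i j : ι} (hij : i ≠ j) (hbdd : BddAbove {B i, B j}) :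
    ∃ (τ : Perm ι) (B' : ι → α), IsCrown τ A B' ∧ ¬ τ.IsCycleOn Set.univ ∧
      holonomy w τ A B' = holonomy w σ A B := by
  classical
  have := nontrivial_of_ne i j hij
  obtain ⟨B', hB, hswap⟩ := exists_ge_apply_swap_eq hbdd
  refine ⟨σ * swap i j, B', ⟨fun k ↦ (hc.le k).trans (hB k), fun k ↦ ?_⟩,
    not_isCycleOn_univ_of_sign_eq_neg hσ (by simp [Perm.sign_swap hij]), ?_⟩
  · rw [Perm.mul_apply, ← hswap]
    exact (hc.apply_le _).trans (hB _)
  · have hreindex : ∏ k, w (A (σ (swap i j k))) (B' k) = ∏ k, w (A (σ k)) (B' k) := by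
      simpa only [hswap] using Equiv.prod_comp (swap i j) fun k ↦ w (A (σ k)) (B' k)
    rw [← holonomy_congr_upper hw hc hB]
    simp only [holonomy, Perm.mul_apply, Finset.prod_div_distrib, hreindex]

end Crown

lemma holonomy_eq_one_of_forall_subtype {α G ι : Type*} [Preorder α] [CommGroup G] [Fintype ι]
    {w : α → α → G} {σ : Perm ι} {A B : ι → α}
    (ih : ∀ (p : ι → Prop) [DecidablePred p] (τ : Perm {i // p i}) (A B : {i // p i} → α),
      Fintype.card {i // p i} < Fintype.card ι → IsCrown τ A B → holonomy w τ A B = 1)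
    (hc : IsCrown σ A B) {i j : ι} (hij : ¬ σ.SameCycle i j) : holonomy w σ A B = 1 := by
  classical
  have hp : ∀ k, σ.SameCycle i (σ k) ↔ σ.SameCycle i k := fun k ↦ Perm.sameCycle_apply_right
  rw [← holonomy_subtype_mul w A B hp, ih _ _ _ _ (Fintype.card_subtype_lt hij) (hc.subtype hp),
    ih _ _ _ _ (Fintype.card_subtype_lt (not_not_intro (Perm.SameCycle.refl σ i)))
      (hc.subtype fun k ↦ not_congr (hp k)), mul_one]

theorem holonomy_eq_one_of_forall_isReducedCrown {α G : Type*} [Preorder α] [CommGroup G]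
    {w : α → α → G} (hw : IsCocycle w)
    (hred : ∀ (ι : Type u) [Fintype ι] (σ : Perm ι) (A B : ι → α),
      IsReducedCrown σ A B → holonomy w σ A B = 1)
    {ι : Type u} [Fintype ι] {σ : Perm ι} {A B : ι → α} (hc : IsCrown σ A B) :
    holonomy w σ A B = 1 := by
  induction hn : Fintype.card ι using Nat.strong_induction_on generalizing ι with
  | _ n ih =>
  have split : ∀ {τ : Perm ι} {A B : ι → α}, IsCrown τ A B → ¬ τ.IsCycleOn Set.univ →
      holonomy w τ A B = 1 := by
    intro τ A B hc hτ
    obtain ⟨i, j, hij⟩ : ∃ i j, ¬ τ.SameCycle i j := by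
      contrapose! hτ
      exact ⟨τ.bijOn fun x ↦ by simp, fun i _ j _ ↦ hτ i j⟩
    exact holonomy_eq_one_of_forall_subtype
      (fun p _ τ A B hlt hc ↦ ih _ (hn ▸ hlt) hc rfl) hc hij
  by_cases hσ : σ.IsCycleOn Set.univ
  swap
  · exact split hc hσ
  by_cases hbelow : Pairwise fun i j ↦ ¬ BddBelow {A i, A j}
  swap
  · obtain ⟨i, j, hij, hbdd⟩ : ∃ i j, i ≠ j ∧ BddBelow {A i, A j} := by
      simpa [Pairwise] using hbelow
    obtain ⟨τ, A', hc', hτ, heq⟩ := hc.exists_not_isCycleOn_of_bddBelow hw hσ hij hbdd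
    exact heq ▸ split hc' hτ
  by_cases habove : Pairwise fun i j ↦ ¬ BddAbove {B i, B j}
  swap
  · obtain ⟨i, j, hij, hbdd⟩ : ∃ i j, i ≠ j ∧ BddAbove {B i, B j} := by
      simpa [Pairwise] using habove
    obtain ⟨τ, B', hc', hτ, heq⟩ := hc.exists_not_isCycleOn_of_bddAbove hw hσ hij hbdd
    exact heq ▸ split hc' hτ
  exact hred ι σ A B ⟨hc, hσ, hbelow, habove⟩

lemma prod_div_eq_one_of_not_linearIndependent {K V ι : Type*} [Field K] [AddCommGroup V]
    [Module K V] [Fintype ι] {σ : Perm ι} (hσ : σ.IsCycleOn Set.univ) {x : ι → V}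
    (hx : LinearIndependent K x) {a b : ι → Kˣ}
    (h : ¬ LinearIndependent K fun i ↦ a i • x i - b i • x (σ i)) : ∏ i, a i / b i = 1 := by
  obtain ⟨t, hsum, i, hi⟩ := Fintype.not_linearIndependent_iff.1 h
  have hrec : ∀ j, t (σ j) * a (σ j) = t j * b j := by
    refine fun j ↦ sub_eq_zero.1 <|
      Fintype.linearIndependent_iff.1 (hx.comp σ σ.injective)
        (fun j ↦ t (σ j) * a (σ j) - t j * b j) ?_ j
    calc
      ∑ j, (t (σ j) * a (σ j) - t j * b j) • x (σ j)
        = ∑ j, (t (σ j) * a (σ j)) • x (σ j) - ∑ j, (t j * b j) • x (σ j) := by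
          simp only [sub_smul, Finset.sum_sub_distrib]
      _ = ∑ j, (t j * a j) • x j - ∑ j, (t j * b j) • x (σ j) := by
          rw [Equiv.sum_comp σ fun j ↦ (t j * a j) • x j]
      _ = ∑ j, t j • (a j • x j - b j • x (σ j)) := by
          simp only [smul_sub, Finset.sum_sub_distrib, Units.smul_def, smul_smul]
      _ = 0 := hsum
  have ht : ∀ j, t j ≠ 0 := forall_of_isCycleOn_univ hσ
    (fun j hj h0 ↦ mul_ne_zero hj (b j).ne_zero (by rw [← hrec, h0, zero_mul])) hi
  have hprod : (∏ j, t j) * ∏ j, (a j : K) = (∏ j, t j) * ∏ j, (b j : K) := by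
    rw [← Finset.prod_mul_distrib, ← Finset.prod_mul_distrib,
      ← Equiv.prod_comp σ fun j ↦ t j * a j]
    exact Finset.prod_congr rfl fun j _ ↦ hrec j
  rw [Finset.prod_div_distrib, div_eq_one, Units.ext_iff, Units.coe_prod, Units.coe_prod]
  exact mul_left_cancel₀ (Finset.prod_ne_zero_iff.2 fun j _ ↦ ht j) hprod

section RankOne

variable {𝕜 E F ι : Type*} [RCLike 𝕜] [NormedAddCommGroup E] [InnerProductSpace 𝕜 E]
  [NormedAddCommGroup F] [InnerProductSpace 𝕜 F]

lemma eq_smul_of_rankOne_eq_rankOne {a b : E} {v w : F} (hv : v ≠ 0)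
    (h : InnerProductSpace.rankOne 𝕜 a v = InnerProductSpace.rankOne 𝕜 b w) :
    a = (inner 𝕜 w v / inner 𝕜 v v) • b := by
  have hvv : inner 𝕜 v v ≠ 0 := inner_self_ne_zero.2 hv
  have happly : inner 𝕜 v v • a = inner 𝕜 w v • b := by
    simpa only [InnerProductSpace.rankOne_apply] using DFunLike.congr_fun h v
  rw [div_eq_inv_mul, mul_smul, ← happly, inv_smul_smul₀ hvv]

variable [Fintype ι]

lemma range_sum_rankOne_le (z : ι → E) (f : ι → F) :
    (∑ i, InnerProductSpace.rankOne 𝕜 (z i) (f i)).range ≤ Submodule.span 𝕜 (Set.range z) := by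
  rintro _ ⟨h, rfl⟩
  simp only [ContinuousLinearMap.coe_coe, sum_apply, InnerProductSpace.rankOne_apply]
  exact sum_mem fun i _ ↦ Submodule.smul_mem _ _ (Submodule.subset_span ⟨i, rfl⟩)

lemma range_sum_rankOne_of_orthogonal (z : ι → E) {f : ι → F} (hf : ∀ i, f i ≠ 0)
    (horth : Pairwise fun i j ↦ inner 𝕜 (f i) (f j) = 0) :
    (∑ i, InnerProductSpace.rankOne 𝕜 (z i) (f i)).range = Submodule.span 𝕜 (Set.range z) := by
  refine (range_sum_rankOne_le z f).antisymm (Submodule.span_le.2 ?_)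
  rintro _ ⟨j, rfl⟩
  refine ⟨(inner 𝕜 (f j) (f j))⁻¹ • f j, ?_⟩
  have happly : (∑ i, InnerProductSpace.rankOne 𝕜 (z i) (f i)) (f j) =
      inner 𝕜 (f j) (f j) • z j := by
    rw [sum_apply, Finset.sum_eq_single j (fun i _ hij ↦ ?_) (by simp)]
    · exact InnerProductSpace.rankOne_apply ..
    · rw [InnerProductSpace.rankOne_apply, horth hij, zero_smul]
  rw [ContinuousLinearMap.coe_coe, map_smul, happly, inv_smul_smul₀ (inner_self_ne_zero.2 (hf j))]

lemma rank_range_sum_rankOne_of_orthogonal {z : ι → E} (hz : LinearIndependent 𝕜 z) {f : ι → F}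
    (hf : ∀ i, f i ≠ 0) (horth : Pairwise fun i j ↦ inner 𝕜 (f i) (f j) = 0) :
    Module.rank 𝕜 (∑ i, InnerProductSpace.rankOne 𝕜 (z i) (f i)).range = Fintype.card ι := by
  have := Module.Finite.span_of_finite 𝕜 (Set.finite_range z)
  rw [range_sum_rankOne_of_orthogonal z hf horth, ← Module.finrank_eq_rank,
    finrank_span_eq_card hz]

lemma rank_range_sum_rankOne_lt [Nonempty ι] {y : ι → E} (hy : ∑ i, y i = 0) (f : ι → F) :
    Module.rank 𝕜 (∑ i, InnerProductSpace.rankOne 𝕜 (y i) (f i)).range < Fintype.card ι := by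
  have hdep : ¬ LinearIndependent 𝕜 y :=
    Fintype.not_linearIndependent_iff.2 ⟨1, by simpa using hy, Classical.arbitrary ι, one_ne_zero⟩
  have := Module.Finite.span_of_finite 𝕜 (Set.finite_range y)
  rw [linearIndependent_iff_card_le_finrank_span, not_le, Set.finrank] at hdep
  calc
    Module.rank 𝕜 (∑ i, InnerProductSpace.rankOne 𝕜 (y i) (f i)).range
      ≤ Module.rank 𝕜 (Submodule.span 𝕜 (Set.range y)) :=
        Submodule.rank_mono (range_sum_rankOne_le y f)
    _ = Module.finrank 𝕜 (Submodule.span 𝕜 (Set.range y)) := (Module.finrank_eq_rank ..).symm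
    _ < Fintype.card ι := mod_cast hdep

end RankOne

section Commuting

variable {𝕜 E : Type*} [RCLike 𝕜] [NormedAddCommGroup E] [InnerProductSpace 𝕜 E]
  {K M : Submodule 𝕜 E} [K.HasOrthogonalProjection] [M.HasOrthogonalProjection]

lemma isOrtho_of_commute_starProjection (hcomm : Commute K.starProjection M.starProjection)
    (hKM : K ⊓ M = ⊥) : K ⟂ M := by
  rw [← Submodule.starProjection_comp_starProjection_eq_zero_iff]
  ext x
  have hx : K.starProjection (M.starProjection x) ∈ K ⊓ M :=
    ⟨Submodule.starProjection_apply_mem .., by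
      rw [← mul_apply_eq_comp, hcomm.eq]; exact Submodule.starProjection_apply_mem ..⟩
  simpa [hKM] using hx

lemma commute_starProjection_orthogonal
    (hcomm : Commute K.starProjection M.starProjection) :
    Commute Kᗮ.starProjection Mᗮ.starProjection := by
  simp only [Submodule.starProjection_orthogonal']
  exact (Commute.one_left _).sub_left ((Commute.one_right _).sub_right hcomm)

end Commuting

section Lattice

variable {H : Type*} [NormedAddCommGroup H] [InnerProductSpace ℂ H] {L : Set (Submodule ℂ H)}
  {M N : Submodule ℂ H}

lemma le_closedJoin {S : Set (Submodule ℂ H)} (hN : N ∈ S) : N ≤ closedJoin S :=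
  (le_sSup hN).trans (Submodule.le_topologicalClosure _)

lemma closedJoin_le {S : Set (Submodule ℂ H)} (hM : IsClosed (M : Set H)) (h : ∀ N ∈ S, N ≤ M) :
    closedJoin S ≤ M :=
  Submodule.topologicalClosure_minimal _ (sSup_le h) hM

lemma minus_mem (hL : IsSubspaceLattice L) (N : Submodule ℂ H) : minus L N ∈ L :=
  hL.join_mem _ fun _ hE ↦ hE.1

lemma minus_mono (hMN : M ≤ N) : minus L M ≤ minus L N :=
  Submodule.topologicalClosure_mono <| sSup_le_sSup fun _ hE ↦
    ⟨hE.1, fun hM ↦ hE.2 (hMN.trans hM)⟩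

lemma le_minus {E : Submodule ℂ H} (hE : E ∈ L) (hNE : ¬ N ≤ E) : E ≤ minus L N :=
  le_closedJoin ⟨hE, hNE⟩

lemma minus_closedJoin_pair_le (hL : IsSubspaceLattice L) :
    minus L (closedJoin {M, N}) ≤ (minus L M ⊔ minus L N).topologicalClosure := by
  refine closedJoin_le (Submodule.isClosed_topologicalClosure _) fun E hE ↦
    le_trans ?_ (Submodule.le_topologicalClosure _)
  by_cases hM : M ≤ E
  · refine (le_minus hE.1 fun hN ↦ hE.2 ?_).trans le_sup_right
    exact closedJoin_le (hL.isClosed E hE.1) (by simp [hM, hN])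
  · exact (le_minus hE.1 hM).trans le_sup_left

lemma bddBelow_of_inf_ne_bot (hL : IsSubspaceLattice L) {A B : famF L}
    (h : (A : Submodule ℂ H) ⊓ B ≠ ⊥) : BddBelow {A, B} := by
  have hmem : (A : Submodule ℂ H) ⊓ B ∈ L := by
    rw [← sInf_pair]
    exact hL.sInf_mem _ (Set.pair_subset A.2.1 B.2.1)
  have hminus : minus L (A ⊓ B) ≠ ⊤ := ne_top_of_le_ne_top A.2.2.2 (minus_mono inf_le_left)
  refine ⟨⟨A ⊓ B, hmem, h, hminus⟩, ?_⟩
  rintro C (rfl | rfl)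
  exacts [inf_le_left (b := B.1), inf_le_right (a := A.1)]

lemma bddAbove_of_orthogonal_inf_ne_bot (hL : IsSubspaceLattice L) {A B : famF L}
    (h : (minus L (A : Submodule ℂ H))ᗮ ⊓ (minus L (B : Submodule ℂ H))ᗮ ≠ ⊥) :
    BddAbove {A, B} := by
  let J : Submodule ℂ H := closedJoin {A.1, B.1}
  have hA : A ≤ J := le_closedJoin (by simp)
  have hB : B ≤ J := le_closedJoin (by simp)
  have hJ : J ∈ L := hL.join_mem _ (Set.pair_subset A.2.1 B.2.1)
  have hminus : minus L J ≠ ⊤ := by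
    refine ne_top_of_le_ne_top (fun htop ↦ h ?_) (minus_closedJoin_pair_le hL)
    rw [Submodule.inf_orthogonal, ← Submodule.orthogonal_closure, htop,
      Submodule.top_orthogonal_eq_bot]
  exact ⟨⟨J, hJ, ne_bot_of_le_ne_bot A.2.2.1 hA, hminus⟩, by
    rintro C (rfl | rfl)
    exacts [hA, hB]⟩

lemma nontrivial_coe (A : famF L) : Nontrivial (A : Submodule ℂ H) :=
  Submodule.nontrivial_iff_ne_bot.2 A.2.2.1

variable [CompleteSpace H]

lemma nontrivial_minus_orthogonal (hL : IsSubspaceLattice L) (A : famF L) :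
    Nontrivial (minus L (A : Submodule ℂ H))ᗮ := by
  have := (hL.isClosed _ (minus_mem hL A)).completeSpace_coe
  exact Submodule.nontrivial_iff_ne_bot.2 (mt Submodule.orthogonal_eq_bot_iff.1 A.2.2.2)

lemma projOf_eq_starProjection (E : Submodule ℂ H) [hE : CompleteSpace E] :
    projOf E = E.starProjection :=
  dif_pos (completeSpace_coe_iff_isComplete.1 hE).isClosed

lemma commute_starProjection (hL : IsCSL L) (hM : M ∈ L) (hN : N ∈ L) [CompleteSpace M]
    [CompleteSpace N] : Commute M.starProjection N.starProjection := by
  rw [← projOf_eq_starProjection, ← projOf_eq_starProjection]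
  exact hL.commutes M hM N hN

lemma isOrtho_of_not_bddBelow (hL : IsCSL L) {A B : famF L} (h : ¬ BddBelow {A, B}) :
    (A : Submodule ℂ H) ⟂ B := by
  have := (hL.isClosed A A.2.1).completeSpace_coe
  have := (hL.isClosed B B.2.1).completeSpace_coe
  exact isOrtho_of_commute_starProjection (commute_starProjection hL A.2.1 B.2.1) <|
    not_ne_iff.1 (mt (bddBelow_of_inf_ne_bot hL.toIsSubspaceLattice) h)

lemma isOrtho_orthogonal_of_not_bddAbove (hL : IsCSL L) {A B : famF L} (h : ¬ BddAbove {A, B}) :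
    (minus L (A : Submodule ℂ H))ᗮ ⟂ (minus L (B : Submodule ℂ H))ᗮ := by
  have hA := minus_mem hL.toIsSubspaceLattice A
  have hB := minus_mem hL.toIsSubspaceLattice B
  have := (hL.isClosed _ hA).completeSpace_coe
  have := (hL.isClosed _ hB).completeSpace_coe
  exact isOrtho_of_commute_starProjection
    (commute_starProjection_orthogonal (commute_starProjection hL hA hB)) <|
    not_ne_iff.1 (mt (bddAbove_of_orthogonal_inf_ne_bot hL.toIsSubspaceLattice) h)

end Lattice

section Algebra

variable {H : Type*} [NormedAddCommGroup H] [InnerProductSpace ℂ H] {L : Set (Submodule ℂ H)}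
  {Φ : (H →L[ℂ] H) → (H →L[ℂ] H)}

lemma rankOne_eq (x f : H) : rankOne x f = InnerProductSpace.rankOne ℂ x f := rfl

lemma rankOne_mem_algL {N : Submodule ℂ H} (x : N) (f : (minus L N)ᗮ) :
    rankOne (x : H) (f : H) ∈ algL L := by
  intro E hE y hy
  rw [rankOne_eq, InnerProductSpace.rankOne_apply]
  by_cases hN : N ≤ E
  · exact E.smul_mem _ (hN x.2)
  · rw [Submodule.inner_left_of_mem_orthogonal (le_minus hE hN hy) f.2, zero_smul]
    exact E.zero_mem

lemma sum_mem_algL {ι : Type*} (s : Finset ι) {T : ι → H →L[ℂ] H} (hT : ∀ i, T i ∈ algL L) :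
    ∑ i ∈ s, T i ∈ algL L := by
  intro E hE x hx
  rw [sum_apply]
  exact sum_mem fun i _ ↦ hT i E hE x hx

lemma map_sum_of_isLinearOnAlg (hΦ : IsLinearOnAlg L Φ) {ι : Type*} (s : Finset ι)
    {T : ι → H →L[ℂ] H} (hT : ∀ i, T i ∈ algL L) : Φ (∑ i ∈ s, T i) = ∑ i ∈ s, Φ (T i) := by
  classical
  induction s using Finset.induction_on with
  | empty => simpa using hΦ.map_smul 0 0 (sum_mem_algL ∅ hT)
  | insert i s hi ih =>
    rw [Finset.sum_insert hi, Finset.sum_insert hi, hΦ.map_add _ (hT i) _ (sum_mem_algL s hT), ih]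

lemma map_rankOne_ne_zero (hrank : RankPreserving L Φ) {x f : H} (hx : x ≠ 0) (hf : f ≠ 0)
    (hmem : rankOne x f ∈ algL L) : Φ (rankOne x f) ≠ 0 := by
  have hone : opRank (rankOne x f) = 1 := InnerProductSpace.rank_rankOne hx hf
  intro h0
  have hmap := hrank _ hmem (hone ▸ Cardinal.one_lt_aleph0)
  rw [h0, hone] at hmap
  exact zero_ne_one (LinearMap.rank_zero.symm.trans hmap)

end Algebra

section Factorization

variable {H : Type*} [NormedAddCommGroup H] [InnerProductSpace ℂ H] {L : Set (Submodule ℂ H)}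
  {Φ : (H →L[ℂ] H) → (H →L[ℂ] H)} {U : (N : Submodule ℂ H) → N →ₗ[ℂ] H}
  {V : (N : Submodule ℂ H) → (minus L N)ᗮ →ₗ[ℂ] H}

/-- The families `U` and `V` witness that every member of `famF L` is consistent with respect
to `Φ`. -/
def Factors (L : Set (Submodule ℂ H)) (Φ : (H →L[ℂ] H) → (H →L[ℂ] H))
    (U : (N : Submodule ℂ H) → N →ₗ[ℂ] H) (V : (N : Submodule ℂ H) → (minus L N)ᗮ →ₗ[ℂ] H) :
    Prop :=
  ∀ N ∈ famF L, ∀ (x : N) (f : (minus L N)ᗮ),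
    Φ (rankOne (x : H) (f : H)) = rankOne (U N x) (V N f)

/-- Along every inclusion `A ≤ B` of members of `famF L`, the map `U A` is `w A B` times the
restriction of `U B`; only the values of `w` on such pairs matter. -/
def IsScaling (U : (N : Submodule ℂ H) → N →ₗ[ℂ] H) (w : famF L → famF L → ℂˣ) : Prop :=
  ∀ ⦃A B : famF L⦄ (hAB : A ≤ B) (x : (A : Submodule ℂ H)),
    U A x = w A B • U B (Submodule.inclusion hAB x)

lemma Factors.ne_zero (hUV : Factors L Φ U V) (hrank : RankPreserving L Φ) {N : Submodule ℂ H}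
    (hN : N ∈ famF L) {x : N} {f : (minus L N)ᗮ} (hx : x ≠ 0) (hf : f ≠ 0) :
    U N x ≠ 0 ∧ V N f ≠ 0 := by
  have hne : Φ (rankOne (x : H) (f : H)) ≠ 0 :=
    map_rankOne_ne_zero hrank (by simpa using hx) (by simpa using hf) (rankOne_mem_algL x f)
  rwa [hUV N hN, rankOne_eq, Ne, InnerProductSpace.rankOne_eq_zero, not_or] at hne

lemma IsScaling.eq {w : famF L → famF L → ℂˣ} (hw : IsScaling U w)
    (hU : ∀ N ∈ famF L, Function.Injective (U N)) {A B : famF L} (hAB : A ≤ B) {c : ℂ}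
    (hc : ∀ x : (A : Submodule ℂ H), U A x = c • U B (Submodule.inclusion hAB x)) :
    c = w A B := by
  have := nontrivial_coe A
  obtain ⟨x, hx⟩ := exists_ne (0 : (A : Submodule ℂ H))
  have hne : U B (Submodule.inclusion hAB x) ≠ 0 := by
    rwa [Ne, map_eq_zero_iff _ (hU B B.2), map_eq_zero_iff _ (Submodule.inclusion_injective hAB)]
  exact smul_left_injective ℂ hne ((hc x).symm.trans (hw hAB x))

lemma IsScaling.isCocycle {w : famF L → famF L → ℂˣ} (hw : IsScaling U w)
    (hU : ∀ N ∈ famF L, Function.Injective (U N)) : IsCocycle w := by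
  intro A B C hAB hBC
  refine Units.ext (hw.eq hU (hAB.trans hBC) fun x ↦ ?_).symm
  rw [hw hAB, hw hBC, ← mul_smul]
  rfl

/-- The holonomy of `w` along a walk through two comparable members of `famF L` is computed by
passing through the larger one. -/
lemma IsScaling.exists_eq_div {w : famF L → famF L → ℂˣ} (hw : IsScaling U w)
    (hU : ∀ N ∈ famF L, Function.Injective (U N)) {A A' : famF L} (hcomp : A ≤ A' ∨ A' ≤ A) {c : ℂ}
    (hup : ∀ (h : A ≤ A') (x : (A : Submodule ℂ H)), U A x = c • U A' (Submodule.inclusion h x))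
    (hdown : ∀ (h : A' ≤ A) (x : (A' : Submodule ℂ H)),
      U A' x = c⁻¹ • U A (Submodule.inclusion h x)) :
    ∃ B, A ≤ B ∧ A' ≤ B ∧ c = ↑(w A B / w A' B) := by
  have hself := (hw.isCocycle hU).apply_self
  rcases hcomp with h | h
  · exact ⟨A', h, le_rfl, by rw [hself, div_one]; exact hw.eq hU h (hup h)⟩
  · refine ⟨A, le_rfl, h, inv_injective ?_⟩
    rw [hself, one_div, Units.val_inv_eq_inv_val, inv_inv]
    exact hw.eq hU h (hdown h)

variable [CompleteSpace H]

lemma Factors.injective (hUV : Factors L Φ U V) (hL : IsSubspaceLattice L)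
    (hrank : RankPreserving L Φ) {N : Submodule ℂ H} (hN : N ∈ famF L) :
    Function.Injective (U N) := by
  have := nontrivial_minus_orthogonal hL ⟨N, hN⟩
  obtain ⟨f, hf⟩ := exists_ne (0 : (minus L N)ᗮ)
  refine (injective_iff_map_eq_zero _).2 fun x hx ↦ ?_
  by_contra h0
  exact (hUV.ne_zero hrank hN h0 hf).1 hx

lemma Factors.exists_smul (hUV : Factors L Φ U V) (hL : IsSubspaceLattice L)
    (hrank : RankPreserving L Φ) {A B : famF L} (hAB : A ≤ B) :
    ∃ c : ℂˣ, ∀ x : (A : Submodule ℂ H), U A x = c • U B (Submodule.inclusion hAB x) := by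
  have := nontrivial_coe A
  have := nontrivial_minus_orthogonal hL B
  obtain ⟨x, hx⟩ := exists_ne (0 : (A : Submodule ℂ H))
  obtain ⟨f, hf⟩ := exists_ne (0 : (minus L (B : Submodule ℂ H))ᗮ)
  let f' : (minus L (A : Submodule ℂ H))ᗮ :=
    Submodule.inclusion (Submodule.orthogonal_le (minus_mono hAB)) f
  have hf' : f' ≠ 0 := fun h ↦ hf ((map_eq_zero_iff _ (Submodule.inclusion_injective _)).1 h)
  obtain ⟨hUx, hVf⟩ := hUV.ne_zero hrank A.2 hx hf'
  have hsmul : ∀ y, U A y = _ • U B (Submodule.inclusion hAB y) := fun y ↦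
    eq_smul_of_rankOne_eq_rankOne hVf <|
      (hUV A A.2 y f').symm.trans (hUV B B.2 (Submodule.inclusion hAB y) f)
  refine ⟨Units.mk0 _ fun h0 ↦ hUx ?_, hsmul⟩
  rw [hsmul, h0, zero_smul]

lemma Factors.exists_isScaling (hUV : Factors L Φ U V) (hL : IsSubspaceLattice L)
    (hrank : RankPreserving L Φ) : ∃ w : famF L → famF L → ℂˣ, IsScaling U w := by
  have h : ∀ A B : famF L, ∃ c : ℂˣ, ∀ (hAB : A ≤ B) (x : (A : Submodule ℂ H)),
      U A x = c • U B (Submodule.inclusion hAB x) := by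
    intro A B
    by_cases hAB : A ≤ B
    · obtain ⟨c, hc⟩ := hUV.exists_smul hL hrank hAB
      exact ⟨c, fun _ ↦ hc⟩
    · exact ⟨1, fun h ↦ absurd h hAB⟩
  choose w hw using h
  exact ⟨w, fun A B ↦ hw A B⟩

end Factorization

section Rank

variable {H ι : Type*} [NormedAddCommGroup H] [InnerProductSpace ℂ H] {L : Set (Submodule ℂ H)}
  {Φ : (H →L[ℂ] H) → (H →L[ℂ] H)} {U : (N : Submodule ℂ H) → N →ₗ[ℂ] H}
  {V : (N : Submodule ℂ H) → (minus L N)ᗮ →ₗ[ℂ] H} [Fintype ι]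

lemma Factors.not_linearIndependent (hUV : Factors L Φ U V) (hlin : IsLinearOnAlg L Φ)
    (hrank : RankPreserving L Φ) [Nonempty ι] {B : ι → famF L}
    {z : ∀ i, (B i : Submodule ℂ H)} (hz : ∑ i, U (B i) (z i) = 0)
    {f : ∀ i, (minus L (B i : Submodule ℂ H))ᗮ} (hf : ∀ i, f i ≠ 0)
    (horth : Pairwise fun i j ↦ inner ℂ (f i : H) (f j) = 0) :
    ¬ LinearIndependent ℂ fun i ↦ (z i : H) := by
  intro hind
  have hmem : ∀ i, rankOne (z i : H) (f i : H) ∈ algL L := fun i ↦ rankOne_mem_algL (z i) (f i)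
  have hT : opRank (∑ i, rankOne (z i : H) (f i : H)) = Fintype.card ι :=
    rank_range_sum_rankOne_of_orthogonal hind (by simpa using hf) horth
  have hΦT : Φ (∑ i, rankOne (z i : H) (f i : H)) =
      ∑ i, rankOne (U (B i) (z i)) (V (B i) (f i)) := by
    rw [map_sum_of_isLinearOnAlg hlin _ hmem]
    exact Finset.sum_congr rfl fun i _ ↦ hUV (B i) (B i).2 (z i) (f i)
  have hlt : opRank (∑ i, rankOne (U (B i) (z i)) (V (B i) (f i))) < Fintype.card ι :=
    rank_range_sum_rankOne_lt hz _
  have heq := hrank _ (sum_mem_algL _ hmem) (hT ▸ Cardinal.natCast_lt_aleph0)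
  rw [hΦT, hT] at heq
  exact hlt.ne heq

variable [CompleteSpace H]

lemma IsScaling.holonomy_eq_one_of_isReducedCrown (hUV : Factors L Φ U V) (hL : IsCSL L)
    (hlin : IsLinearOnAlg L Φ) (hrank : RankPreserving L Φ) {w : famF L → famF L → ℂˣ}
    (hw : IsScaling U w) {σ : Perm ι} {A B : ι → famF L} (hc : IsReducedCrown σ A B) :
    holonomy w σ A B = 1 := by
  cases isEmpty_or_nonempty ι
  · exact Fintype.prod_empty _
  have := fun i ↦ nontrivial_coe (A i)
  have := fun i ↦ nontrivial_minus_orthogonal hL.toIsSubspaceLattice (B i)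
  choose x hx using fun i ↦ exists_ne (0 : (A i : Submodule ℂ H))
  choose f hf using fun i ↦ exists_ne (0 : (minus L (B i : Submodule ℂ H))ᗮ)
  have hxorth : Pairwise fun i j ↦ inner ℂ (x i : H) (x j) = 0 := fun i j hij ↦
    (isOrtho_of_not_bddBelow hL (hc.not_bddBelow hij)).inner_eq (x i).2 (x j).2
  have hforth : Pairwise fun i j ↦ inner ℂ (f i : H) (f j) = 0 := fun i j hij ↦
    (isOrtho_orthogonal_of_not_bddAbove hL (hc.not_bddAbove hij)).inner_eq (f i).2 (f j).2
  have hxind : LinearIndependent ℂ fun i ↦ (x i : H) :=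
    linearIndependent_of_ne_zero_of_inner_eq_zero (by simpa using hx) hxorth
  let z : ∀ i, (B i : Submodule ℂ H) := fun i ↦
    w (A i) (B i) • Submodule.inclusion (hc.le i) (x i) -
      w (A (σ i)) (B i) • Submodule.inclusion (hc.apply_le i) (x (σ i))
  have hUz : ∀ i, U (B i) (z i) = U (A i) (x i) - U (A (σ i)) (x (σ i)) := by
    intro i
    simp only [z, map_sub, Units.smul_def, map_smul, hw (hc.le i), hw (hc.apply_le i)]
  have hsum : ∑ i, U (B i) (z i) = 0 := by
    simp only [hUz, Finset.sum_sub_distrib, Equiv.sum_comp σ fun i ↦ U (A i) (x i), sub_self]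
  exact prod_div_eq_one_of_not_linearIndependent hc.isCycleOn hxind
    (hUV.not_linearIndependent hlin hrank hsum hf hforth)

end Rank

lemma apply_castSucc_finRotate {α : Type*} {n : ℕ} {f : Fin (n + 1) → α}
    (hf : f (Fin.last n) = f 0) (k : Fin n) : f (finRotate n k).castSucc = f k.succ := by
  cases n with
  | zero => exact k.elim0
  | succ n =>
    induction k using Fin.lastCases with
    | last => rw [finRotate_last, Fin.succ_last, hf, Fin.castSucc_zero]
    | cast k => rw [finRotate_apply, Fin.coeSucc_eq_succ, Fin.succ_castSucc]

end CSLCycle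

open CSLCycle in
theorem stmt_10_general {H : Type*} [NormedAddCommGroup H] [InnerProductSpace ℂ H]
    [CompleteSpace H] (L : Set (Submodule ℂ H)) (hL : IsCSL L)
    (Φ : (H →L[ℂ] H) → (H →L[ℂ] H)) (hlin : IsLinearOnAlg L Φ) (hrank : RankPreserving L Φ)
    (U : (N : Submodule ℂ H) → N →ₗ[ℂ] H) (V : (N : Submodule ℂ H) → (minus L N)ᗮ →ₗ[ℂ] H)
    (hUV : ∀ N ∈ famF L, ∀ (x : N) (f : (minus L N)ᗮ),
      Φ (rankOne (x : H) (f : H)) = rankOne (U N x) (V N f))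
    (n : ℕ) (M : Fin (n + 1) → Submodule ℂ H) (hM : ∀ k, M k ∈ famF L)
    (hcycle : M (Fin.last n) = M 0)
    (hcomp : ∀ k : Fin n, Comparable' (M k.castSucc) (M k.succ)) (lam : Fin n → ℂ)
    (hUp : ∀ k : Fin n, M k.castSucc ≤ M k.succ →
      ∀ (x : H) (h1 : x ∈ M k.castSucc) (h2 : x ∈ M k.succ),
        U (M k.castSucc) ⟨x, h1⟩ = lam k • U (M k.succ) ⟨x, h2⟩)
    (hDown : ∀ k : Fin n, M k.succ ≤ M k.castSucc →
      ∀ (x : H) (h1 : x ∈ M k.succ) (h2 : x ∈ M k.castSucc),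
        U (M k.succ) ⟨x, h1⟩ = (lam k)⁻¹ • U (M k.castSucc) ⟨x, h2⟩) :
    ∏ k, lam k = 1 := by
  have hF : Factors L Φ U V := hUV
  have hinj := fun N ↦ hF.injective (N := N) hL.toIsSubspaceLattice hrank
  obtain ⟨w, hw⟩ := hF.exists_isScaling hL.toIsSubspaceLattice hrank
  let A : Fin (n + 1) → famF L := fun k ↦ ⟨M k, hM k⟩
  have hA : ∀ k : Fin n, A (finRotate n k).castSucc = A k.succ :=
    apply_castSucc_finRotate (Subtype.ext hcycle)
  choose B hle hsucc_le hlam using fun k : Fin n ↦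
    hw.exists_eq_div hinj (A := A k.castSucc) (A' := A k.succ) (hcomp k)
      (fun h x ↦ hUp k h x x.2 (h x.2)) (fun h x ↦ hDown k h x x.2 (h x.2))
  have hcrown : IsCrown (finRotate n) (fun k ↦ A k.castSucc) B :=
    ⟨hle, fun k ↦ (hA k).trans_le (hsucc_le k)⟩
  calc
    ∏ k, lam k = ↑(holonomy w (finRotate n) (fun k ↦ A k.castSucc) B) := by
      simp only [holonomy, Units.coe_prod, hA, hlam]
    _ = 1 := by
      rw [holonomy_eq_one_of_forall_isReducedCrown (hw.isCocycle hinj)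
        (fun ι _ σ A B hc ↦ hw.holonomy_eq_one_of_isReducedCrown hF hL hlin hrank hc) hcrown,
        Units.val_one]

theorem stmt_10 {H : Type*} [NormedAddCommGroup H] [InnerProductSpace ℂ H]
    [CompleteSpace H] [TopologicalSpace.SeparableSpace H]
    (L : Set (Submodule ℂ H)) (hL : IsCSL L) (hcd : IsCompletelyDistributive L)
    (Φ : (H →L[ℂ] H) → (H →L[ℂ] H)) (hlin : IsLinearOnAlg L Φ)
    (hrank : RankPreserving L Φ)
    (hcons : ∀ N ∈ famF L, Consistent L Φ N)
    (U : (N : Submodule ℂ H) → (N →ₗ[ℂ] H))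
    (V : (N : Submodule ℂ H) → ((((minus L N)ᗮ : Submodule ℂ H)) →ₗ[ℂ] H))
    (hUV : ∀ N ∈ famF L, ∀ (x : N) (f : ((minus L N)ᗮ : Submodule ℂ H)),
      Φ (rankOne (x : H) (f : H)) = rankOne (U N x) (V N f))
    (n : ℕ) (M : Fin (n + 1) → Submodule ℂ H)
    (hM : ∀ k, M k ∈ famF L) (hcycle : M (Fin.last n) = M 0)
    (hcomp : ∀ k : Fin n, Comparable' (M k.castSucc) (M k.succ))
    (lam : Fin n → ℂ) (hlam : ∀ k, lam k ≠ 0)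
    (hUp : ∀ k : Fin n, M k.castSucc ≤ M k.succ →
      (∀ (x : H) (h1 : x ∈ M k.castSucc) (h2 : x ∈ M k.succ),
        U (M k.castSucc) ⟨x, h1⟩ = lam k • U (M k.succ) ⟨x, h2⟩) ∧
      (∀ (f : H) (h1 : f ∈ (minus L (M k.succ))ᗮ) (h2 : f ∈ (minus L (M k.castSucc))ᗮ),
        V (M k.succ) ⟨f, h1⟩ = (starRingEnd ℂ) (lam k) • V (M k.castSucc) ⟨f, h2⟩))
    (hDown : ∀ k : Fin n, M k.succ ≤ M k.castSucc →
      (∀ (x : H) (h1 : x ∈ M k.succ) (h2 : x ∈ M k.castSucc),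
        U (M k.succ) ⟨x, h1⟩ = (lam k)⁻¹ • U (M k.castSucc) ⟨x, h2⟩) ∧
      (∀ (f : H) (h1 : f ∈ (minus L (M k.castSucc))ᗮ) (h2 : f ∈ (minus L (M k.succ))ᗮ),
        V (M k.castSucc) ⟨f, h1⟩ = (starRingEnd ℂ) ((lam k)⁻¹) • V (M k.succ) ⟨f, h2⟩)) :
    ∏ k, lam k = 1 :=
  stmt_10_general L hL Φ hlin hrank U V hUV n M hM hcycle hcomp lam (fun k h ↦ (hUp k h).1)
    fun k h ↦ (hDown k h).1
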